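/- Let d be an odd positive integer and let 𝒟 = {D₁, D₂} be nontrivial partitions of d (neither equal to [d] nor to [1,…,1]) with ν(D₁) + ν(D₂) = d − 1 and ν(D₁) ≥ ν(D₂). Suppose 𝒟 ≠ {[2,…,2,1], [2,…,2,1]}, gcd(D₁) = 1, and every part of D₁ is at least 3. Then for every permutation α of the d-element set with cycle type D₁ there exists a permutation β with cycle type D₂ such that ⟨α, β⟩ is a primitive permutation group. -/

import Mathlib

/-- The cycle type of a permutation, including fixed points as parts equal to `1`. -/
def fullCycleType {Ω : Type*} [Fintype Ω] [DecidableEq Ω] (σ : Equiv.Perm Ω) : Multiset ℕ :=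
  σ.cycleType + Multiset.replicate (Fintype.card Ω - σ.support.card) 1

/-- A multiset of positive integers summing to `d`, i.e. a partition of `d`. -/
def IsPartitionOf (d : ℕ) (D : Multiset ℕ) : Prop :=
  (∀ x ∈ D, 0 < x) ∧ D.sum = d

/-- The defect `ν(D) = Σⱼ (dⱼ − 1)` of a partition. -/
def nu (D : Multiset ℕ) : ℕ := (D.map (· - 1)).sum

/-- The partition `[2,…,2,1]` of an odd number `d`, with `(d−1)/2` parts equal to `2`. -/
def twosAndOne (d : ℕ) : Multiset ℕ := Multiset.replicate ((d - 1) / 2) 2 + {1}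

/-- A subgroup of the symmetric group on `Ω` is transitive. -/
def SubgroupTransitive {Ω : Type*} (G : Subgroup (Equiv.Perm Ω)) : Prop :=
  ∀ x y : Ω, ∃ g ∈ G, g x = y

/-- `Λ` is a block for the subgroup `G` of the symmetric group on `Ω`. -/
def IsBlockOf {Ω : Type*} (G : Subgroup (Equiv.Perm Ω)) (Λ : Set Ω) : Prop :=
  Λ.Nonempty ∧ ∀ g ∈ G, (⇑g '' Λ = Λ ∨ Disjoint (⇑g '' Λ) Λ)

/-- A block is trivial if it is a singleton or the whole set. -/
def TrivialBlock {Ω : Type*} (Λ : Set Ω) : Prop :=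
  (∃ x, Λ = {x}) ∨ Λ = Set.univ

/-- A subgroup of the symmetric group is primitive: transitive with only trivial blocks. -/
def SubgroupPrimitive {Ω : Type*} (G : Subgroup (Equiv.Perm Ω)) : Prop :=
  SubgroupTransitive G ∧ ∀ Λ : Set Ω, IsBlockOf G Λ → TrivialBlock Λ

/-- A subgroup of the symmetric group is imprimitive: transitive but not primitive. -/
def SubgroupImprimitive {Ω : Type*} (G : Subgroup (Equiv.Perm Ω)) : Prop :=
  SubgroupTransitive G ∧ ¬ SubgroupPrimitive G

/-- The orbit of `x` under a subgroup `G` of the symmetric group on `Ω`. -/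
def orbSet {Ω : Type*} (G : Subgroup (Equiv.Perm Ω)) (x : Ω) : Set Ω :=
  {y | ∃ g ∈ G, g x = y}

/-- The number of orbits of a subgroup `G` of the symmetric group on `Ω`. -/
noncomputable def numOrbits {Ω : Type*} (G : Subgroup (Equiv.Perm Ω)) : ℕ :=
  Nat.card (Set.range (orbSet G))

/-!
Pick one point in each cycle of `α`, ordered by cycle length: `a₀, a₁, …, aₘ`. The hypothesis on
defects says `m = ν(D₂)`, so `a₁, …, aₘ` can be cut into consecutive chunks `Cᵢ` with `|Cᵢ| + 1`
running through `D₂`; the cycles of `β` are the chunks, each completed by the point `α b` where `b`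
is the last representative before the chunk. This makes `⟨α, β⟩` transitive.

Let a congruence with nontrivial classes be given. If `β` fixes every class, then `α` acts on the
classes as a single cycle, whose length divides all parts of `D₁`, so there is only one class.
Otherwise every `α`-cycle meets a class moved by `β`. All points of such a class are of the form `b`
or `α b` with `b` a representative, and since the `α`-cycles have length at least three, the class
meets each of them at most once. Hence the `α`-cycle length is constant on classes. Two points of
one class then see the same cycle lengths along their `β`-orbits; as these lengths never decrease
along `a₀, a₁, …, aₘ`, this forces the length to be constant on `β`-orbits, so all parts of `D₁` are
equal, contradicting `gcd(D₁) = 1`.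
-/

open Equiv Equiv.Perm Function
open scoped Pointwise

section Action

variable {G X : Type*} [Group G] [MulAction G X]

theorem apply_smul_eq_of_mem_closure {Y : Type*} {T : Set G} {F : X → Y}
    (hF : ∀ g ∈ T, ∀ x, F (g • x) = F x) {g : G} (hg : g ∈ Subgroup.closure T) (x : X) :
    F (g • x) = F x := by
  induction hg using Subgroup.closure_induction generalizing x with
  | mem g hg => exact hF g hg x
  | one => rw [one_smul]
  | mul g h _ _ ihg ihh => rw [mul_smul, ihg, ihh]
  | inv g _ ih => rw [← ih (g⁻¹ • x), smul_inv_smul]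

theorem apply_eq_apply_of_isPretransitive_closure {Y : Type*} {T : Set G}
    [MulAction.IsPretransitive (Subgroup.closure T) X] {F : X → Y}
    (hF : ∀ g ∈ T, ∀ x, F (g • x) = F x) (x y : X) : F x = F y := by
  obtain ⟨g, rfl⟩ := MulAction.exists_smul_eq (Subgroup.closure T) x y
  exact (apply_smul_eq_of_mem_closure hF g.2 x).symm

/-- The subgroup of `G` preserving the equivalence relation `r`; thus `r` is a congruence of the
action, i.e. its classes form a block system of `G`, when this subgroup is everything. -/
def setoidStabilizer (G : Type*) {X : Type*} [Group G] [MulAction G X] (r : Setoid X) :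
    Subgroup G where
  carrier := {g | ∀ x y, r (g • x) (g • y) ↔ r x y}
  one_mem' x y := by rw [one_smul, one_smul]
  mul_mem' hg hh x y := by rw [mul_smul, mul_smul, hg, hh]
  inv_mem' {g} hg x y := by rw [← hg, smul_inv_smul, smul_inv_smul]

theorem exists_ne_rel_of_ne_bot [MulAction.IsPretransitive G X] {r : Setoid X}
    (hr : setoidStabilizer G r = ⊤) (hbot : r ≠ ⊥) (x : X) : ∃ y, y ≠ x ∧ r x y := by
  obtain ⟨u, v, huv, hne⟩ : ∃ u v, r u v ∧ u ≠ v := by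
    by_contra! h
    exact hbot (le_bot_iff.1 fun u v => h u v)
  obtain ⟨g, rfl⟩ := MulAction.exists_smul_eq G u x
  have hg : g ∈ setoidStabilizer G r := hr ▸ Subgroup.mem_top g
  exact ⟨g • v, (MulAction.injective g).ne hne.symm, (hg u v).2 huv⟩

/-- The congruence attached to a subset `B`, with `x` and `y` equivalent when the same group
elements move them into `B`. If `B` is a block, its classes include `B`. -/
def blockSetoid (G : Type*) {X : Type*} [Group G] [MulAction G X] (B : Set X) : Setoid X :=
  Setoid.ker fun x => {g : G | g • x ∈ B}

theorem blockSetoid_iff {B : Set X} {x y : X} :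
    blockSetoid G B x y ↔ ∀ g : G, g • x ∈ B ↔ g • y ∈ B :=
  Set.ext_iff

theorem setoidStabilizer_blockSetoid (B : Set X) : setoidStabilizer G (blockSetoid G B) = ⊤ := by
  refine (Subgroup.eq_top_iff' _).2 fun g x y => ?_
  simp only [blockSetoid_iff, ← mul_smul]
  exact ((Group.mulRight_bijective g).surjective.forall
    (p := fun k => k • x ∈ B ↔ k • y ∈ B)).symm

theorem blockSetoid_iff_mem_of_isBlock {B : Set X} (hB : MulAction.IsBlock G B) {x y : X}
    (hx : x ∈ B) : blockSetoid G B x y ↔ y ∈ B := by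
  rw [blockSetoid_iff]
  refine ⟨fun h => by simpa using (h 1).1 (by simpa using hx), fun hy g => ?_⟩
  have key {u v : X} (hu : u ∈ B) (hv : v ∈ B) (hgu : g • u ∈ B) : g • v ∈ B := by
    have hgB : g • B = B := MulAction.isBlock_iff_smul_eq_of_mem.1 hB hu hgu
    exact hgB ▸ Set.smul_mem_smul_set hv
  exact ⟨key hx hy, key hy hx⟩

theorem isPreprimitive_of_setoid [MulAction.IsPretransitive G X]
    (h : ∀ r : Setoid X, setoidStabilizer G r = ⊤ → r ≠ ⊥ → r = ⊤) :
    MulAction.IsPreprimitive G X where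
  isTrivialBlock_of_isBlock {B} hB := by
    refine or_iff_not_imp_left.2 fun hsub => ?_
    obtain ⟨x, hx, y, hy, hxy⟩ := Set.not_subsingleton_iff.1 hsub
    have hrel : blockSetoid G B x y := (blockSetoid_iff_mem_of_isBlock hB hx).2 hy
    have htop := h _ (setoidStabilizer_blockSetoid B) fun hbot =>
      hxy (by rwa [hbot] at hrel)
    refine Set.eq_univ_of_forall fun z => (blockSetoid_iff_mem_of_isBlock hB hx).1 ?_
    rw [htop]
    trivial

end Action

theorem subgroupPrimitive_of_isPreprimitive {Ω : Type*} (H : Subgroup (Perm Ω))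
    [hH : MulAction.IsPreprimitive H Ω] : SubgroupPrimitive H := by
  refine ⟨fun x y => ?_, fun Λ ⟨hne, hΛ⟩ => ?_⟩
  · obtain ⟨g, hg⟩ := MulAction.exists_smul_eq H x y
    exact ⟨g, g.2, hg⟩
  · have hblock : MulAction.IsBlock H Λ :=
      MulAction.isBlock_iff_smul_eq_or_disjoint.2 fun g => hΛ g g.2
    exact (hH.isTrivialBlock_of_isBlock hblock).imp_left fun h =>
      (Set.exists_eq_singleton_iff_nonempty_subsingleton.2 ⟨hne, h⟩)

section Invariant

variable {Ω Y : Type*} {F : Ω → Y} {σ τ : Perm Ω}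

theorem apply_eq_apply_of_disjoint_mul (hστ : Perm.Disjoint σ τ)
    (hF : ∀ x, F ((σ * τ) x) = F x) (x : Ω) : F (σ x) = F x := by
  obtain hx | hx := hστ x
  · rw [hx]
  · rw [← hF x, mul_apply, hx]

theorem apply_eq_apply_of_sameCycle (hF : ∀ x, F (σ x) = F x) {x y : Ω} (h : σ.SameCycle x y) :
    F x = F y := by
  obtain ⟨i, rfl⟩ := h
  exact (apply_smul_eq_of_mem_closure (T := {σ}) (by simpa using hF)
    (zpow_mem (Subgroup.mem_closure_singleton_self σ) i) x).symm

theorem apply_eq_apply_of_mem_of_formPerm [DecidableEq Ω] {l : List Ω} (hl : l.Nodup)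
    (hF : ∀ x, F (l.formPerm x) = F x) {x y : Ω} (hx : x ∈ l) (hy : y ∈ l) : F x = F y :=
  apply_eq_apply_of_sameCycle hF (hl.isCycleOn_formPerm.2 hx hy)

end Invariant

section Congruence

variable {Ω : Type*} {α β : Perm Ω} {r : Setoid Ω}

theorem minimalPeriod_apply_eq [Finite Ω] (σ : Perm Ω) (x : Ω) :
    minimalPeriod σ (σ x) = minimalPeriod σ x :=
  minimalPeriod_apply (σ.injective.mem_periodicPts x)

theorem rel_apply_self_iff_of_rel (hβ : β ∈ setoidStabilizer (Perm Ω) r) {x y : Ω} (hxy : r x y) :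
    r (β x) x ↔ r (β y) y := by
  have hβxy : r (β x) (β y) := (hβ x y).2 hxy
  exact ⟨fun h => r.trans (r.symm hβxy) (r.trans h hxy),
    fun h => r.trans hβxy (r.trans h (r.symm hxy))⟩

theorem eq_top_of_forall_rel_apply [Fintype Ω]
    [MulAction.IsPretransitive (Subgroup.closure {α, β}) Ω]
    (hα : α ∈ setoidStabilizer (Perm Ω) r) (hgcd : Finset.univ.gcd (minimalPeriod α) = 1)
    (hβ : ∀ x, r (β x) x) : r = ⊤ := by
  let αr : Quotient r → Quotient r := Quotient.map α fun x y h => (hα x y).2 h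
  have hsemi : Semiconj (Quotient.mk r) α αr := fun x => rfl
  have hβr (x : Ω) : Quotient.mk r (β x) = Quotient.mk r x := Quotient.sound (hβ x)
  have hperiodic (x : Ω) : Quotient.mk r x ∈ periodicPts αr :=
    hsemi.mapsTo_periodicPts (α.injective.mem_periodicPts x)
  have hperiod : ∀ x y,
      minimalPeriod αr (Quotient.mk r x) = minimalPeriod αr (Quotient.mk r y) := by
    refine apply_eq_apply_of_isPretransitive_closure (T := {α, β}) ?_
    rintro _ (rfl | rfl) x
    · exact minimalPeriod_apply (hperiodic x)
    · exact congrArg _ (hβr x)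
  have hαr (x : Ω) : Quotient.mk r (α x) = Quotient.mk r x := by
    have hdvd : minimalPeriod αr (Quotient.mk r x) ∣ 1 := hgcd ▸ Finset.dvd_gcd fun y _ =>
      hperiod y x ▸ ((isPeriodicPt_minimalPeriod α y).map hsemi).minimalPeriod_dvd
    exact isPeriodicPt_iff_minimalPeriod_dvd.2 hdvd
  refine Setoid.eq_top_iff.2 fun x y => Quotient.exact ?_
  refine apply_eq_apply_of_isPretransitive_closure (T := {α, β}) ?_ x y
  rintro _ (rfl | rfl)
  exacts [hαr, hβr]

theorem exists_zpow_not_rel_apply [MulAction.IsPretransitive (Subgroup.closure {α, β}) Ω]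
    (hα : α ∈ setoidStabilizer (Perm Ω) r) (hβ : β ∈ setoidStabilizer (Perm Ω) r)
    {z : Ω} (hz : ¬ r (β z) z) (x : Ω) : ∃ i : ℤ, ¬ r (β ((α ^ i) x)) ((α ^ i) x) := by
  by_contra! hfix
  let MeetsOrbit (w : Ω) : Prop := ∃ i : ℤ, r w ((α ^ i) x)
  have hmeets : MeetsOrbit x = MeetsOrbit z := by
    refine apply_eq_apply_of_isPretransitive_closure (T := {α, β}) ?_ x z
    rintro _ (rfl | rfl) w
    · refine propext <| (Equiv.subRight (1 : ℤ)).exists_congr fun i => ?_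
      rw [← hα w, Equiv.subRight_apply, Perm.smul_def, Perm.smul_def, ← mul_apply,
        ← zpow_one_add, add_sub_cancel]
    · exact propext <| exists_congr fun i =>
        ⟨fun h => (hβ _ _).1 (r.trans h (r.symm (hfix i))),
          fun h => r.trans ((hβ _ _).2 h) (hfix i)⟩
  obtain ⟨i, hi⟩ : MeetsOrbit z := hmeets ▸ ⟨0, r.refl x⟩
  exact hz ((rel_apply_self_iff_of_rel hβ hi).2 (hfix i))

variable {A : Set Ω}

theorem eq_of_rel_of_sameCycle (hA : A.Pairwise fun u v => ¬ α.SameCycle u v)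
    (hmoved : ∀ x, β x ≠ x → x ∈ A ∪ α '' A) (hlen : ∀ x, 3 ≤ minimalPeriod α x)
    (hα : α ∈ setoidStabilizer (Perm Ω) r) (hβ : β ∈ setoidStabilizer (Perm Ω) r) {x y : Ω}
    (hx : ¬ r (β x) x) (hxy : r x y) (hs : α.SameCycle x y) : x = y := by
  have hmovedClass {w : Ω} (hw : r x w) : ∃ b ∈ A, α.SameCycle b w ∧ (w = b ∨ w = α b) := by
    have hβw : β w ≠ w := fun h =>
      hx ((rel_apply_self_iff_of_rel hβ hw).2 (h.symm ▸ r.refl w))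
    obtain hw | ⟨b, hb, rfl⟩ := hmoved w hβw
    · exact ⟨w, hw, SameCycle.refl α w, Or.inl rfl⟩
    · exact ⟨b, hb, sameCycle_apply_right.2 (SameCycle.refl α b), Or.inr rfl⟩
  obtain ⟨b, hb, hbx, hxb⟩ := hmovedClass (r.refl x)
  have hrep {w : Ω} (hw : r x w) (hsw : α.SameCycle x w) : w = b ∨ w = α b := by
    obtain ⟨c, hc, hcw, hwc⟩ := hmovedClass hw
    obtain rfl : b = c := hA.eq hb hc (not_not.2 (hbx.trans (hsw.trans hcw.symm)))
    exact hwc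
  by_contra hne
  have hrel : r x b ∧ r b (α b) := by
    rcases hxb with rfl | rfl <;> rcases hrep hxy hs with rfl | rfl
    · exact (hne rfl).elim
    · exact ⟨r.refl _, hxy⟩
    · exact ⟨hxy, r.symm hxy⟩
    · exact (hne rfl).elim
  have hrel₂ : r x (α (α b)) := r.trans hrel.1 (r.trans hrel.2 ((hα _ _).2 hrel.2))
  have hs₂ : α.SameCycle x (α (α b)) := by simpa using hbx.symm
  have hshort : ¬ (IsPeriodicPt α 2 b ∨ IsPeriodicPt α 1 b) := by
    have := hlen b
    rintro (h | h)
    all_goals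
      have := h.minimalPeriod_le (by norm_num)
      omega
  exact hshort ((hrep hrel₂ hs₂).imp id fun h => α.injective h)

theorem minimalPeriod_dvd_of_rel (hA : A.Pairwise fun u v => ¬ α.SameCycle u v)
    (hmoved : ∀ x, β x ≠ x → x ∈ A ∪ α '' A) (hlen : ∀ x, 3 ≤ minimalPeriod α x)
    (hα : α ∈ setoidStabilizer (Perm Ω) r) (hβ : β ∈ setoidStabilizer (Perm Ω) r) {x y : Ω}
    (hx : ¬ r (β x) x) (hxy : r x y) : minimalPeriod α y ∣ minimalPeriod α x := by
  set n := minimalPeriod α x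
  have hfix : (α ^ n) x = x := by
    rw [← iterate_eq_pow]
    exact isPeriodicPt_minimalPeriod α x
  have hrel : r x ((α ^ n) y) := by
    have := (pow_mem hα n x y).2 hxy
    rwa [Perm.smul_def, hfix] at this
  refine IsPeriodicPt.minimalPeriod_dvd ?_
  rw [IsPeriodicPt, IsFixedPt, iterate_eq_pow]
  have hy : ¬ r (β y) y := (rel_apply_self_iff_of_rel hβ hxy).not.1 hx
  exact (eq_of_rel_of_sameCycle hA hmoved hlen hα hβ hy (r.trans (r.symm hxy) hrel)
    (SameCycle.refl α y).pow_right).symm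

theorem minimalPeriod_eq_of_rel [Finite Ω]
    [MulAction.IsPretransitive (Subgroup.closure {α, β}) Ω]
    (hA : A.Pairwise fun u v => ¬ α.SameCycle u v)
    (hmoved : ∀ x, β x ≠ x → x ∈ A ∪ α '' A) (hlen : ∀ x, 3 ≤ minimalPeriod α x)
    (hα : α ∈ setoidStabilizer (Perm Ω) r) (hβ : β ∈ setoidStabilizer (Perm Ω) r)
    {z : Ω} (hz : ¬ r (β z) z) {x y : Ω} (hxy : r x y) :
    minimalPeriod α x = minimalPeriod α y := by
  obtain ⟨i, hi⟩ := exists_zpow_not_rel_apply hα hβ hz x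
  have hrel : r ((α ^ i) x) ((α ^ i) y) := (zpow_mem hα i x y).2 hxy
  have hi' : ¬ r (β ((α ^ i) y)) ((α ^ i) y) := (rel_apply_self_iff_of_rel hβ hrel).not.1 hi
  have hcycle (w : Ω) : minimalPeriod α w = minimalPeriod α ((α ^ i) w) :=
    apply_eq_apply_of_sameCycle (minimalPeriod_apply_eq α) ⟨i, rfl⟩
  rw [hcycle x, hcycle y]
  exact Nat.dvd_antisymm (minimalPeriod_dvd_of_rel hA hmoved hlen hα hβ hi' (r.symm hrel))
    (minimalPeriod_dvd_of_rel hA hmoved hlen hα hβ hi hrel)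

end Congruence

/-- Two distinct points can carry the same labels at all times under `σ` only if the label does not
change along `σ`. Applied to cycle lengths under `α`, this stops the points of a block from having
equal lengths while `σ` changes the length. -/
def IsItineraryRigid {Ω γ : Type*} (f : Ω → γ) (σ : Perm Ω) : Prop :=
  ∀ ⦃x y : Ω⦄, x ≠ y → (∀ n : ℕ, f ((σ ^ n) x) = f ((σ ^ n) y)) → f (σ x) = f x

theorem isPreprimitive_closure_pair {Ω : Type*} [Fintype Ω] {α β : Perm Ω} {A : Set Ω}
    [MulAction.IsPretransitive (Subgroup.closure {α, β}) Ω]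
    (hA : A.Pairwise fun u v => ¬ α.SameCycle u v)
    (hmoved : ∀ x, β x ≠ x → x ∈ A ∪ α '' A) (hlen : ∀ x, 3 ≤ minimalPeriod α x)
    (hgcd : Finset.univ.gcd (minimalPeriod α) = 1)
    (hrigid : IsItineraryRigid (minimalPeriod α) β) :
    MulAction.IsPreprimitive (Subgroup.closure {α, β}) Ω := by
  refine isPreprimitive_of_setoid fun r hr hbot => ?_
  have hstab {g : Perm Ω} (hg : g ∈ Subgroup.closure {α, β}) :
      g ∈ setoidStabilizer (Perm Ω) r := by
    have hmem : (⟨g, hg⟩ : Subgroup.closure {α, β}) ∈ setoidStabilizer _ r :=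
      hr ▸ Subgroup.mem_top _
    exact hmem
  have hα : α ∈ setoidStabilizer (Perm Ω) r := hstab (Subgroup.subset_closure (by simp))
  have hβ : β ∈ setoidStabilizer (Perm Ω) r := hstab (Subgroup.subset_closure (by simp))
  refine eq_top_of_forall_rel_apply (β := β) hα hgcd fun z => by_contra fun hz => ?_
  have hrel {x y : Ω} (hxy : r x y) : minimalPeriod α x = minimalPeriod α y :=
    minimalPeriod_eq_of_rel hA hmoved hlen hα hβ hz hxy
  have hβ_period (x : Ω) : minimalPeriod α (β x) = minimalPeriod α x := by
    obtain ⟨y, hy, hxy⟩ := exists_ne_rel_of_ne_bot hr hbot x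
    exact hrigid hy.symm fun n => hrel ((pow_mem hβ n x y).2 hxy)
  have hconst : ∀ x y, minimalPeriod α x = minimalPeriod α y := by
    refine apply_eq_apply_of_isPretransitive_closure (T := {α, β}) ?_
    rintro _ (rfl | rfl)
    exacts [minimalPeriod_apply_eq _, hβ_period]
  have hdvd : minimalPeriod α z ∣ 1 := hgcd ▸ Finset.dvd_gcd fun y _ => (hconst z y).dvd
  have := Nat.le_of_dvd one_pos hdvd
  have := hlen z
  omega

section Rigid

variable {Ω γ : Type*} {f : Ω → γ}

theorem isItineraryRigid_one : IsItineraryRigid f 1 := fun _ _ _ _ => rfl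

theorem mul_pow_apply_of_apply_eq {σ τ : Perm Ω} (h : Commute σ τ) {x : Ω} (hx : τ x = x)
    (n : ℕ) : ((σ * τ) ^ n) x = (σ ^ n) x := by
  rw [h.mul_pow, mul_apply, pow_apply_eq_self_of_apply_eq_self hx]

theorem IsItineraryRigid.mul [PartialOrder γ] {σ τ : Perm Ω} (hσ : IsItineraryRigid f σ)
    (hτ : IsItineraryRigid f τ) (hστ : Perm.Disjoint σ τ) {t : γ}
    (hle : ∀ x, σ x ≠ x → f x ≤ t) (hge : ∀ x, τ x ≠ x → t ≤ f x) :
    IsItineraryRigid f (σ * τ) := by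
  have hcomm := hστ.commute
  have hσ_apply {u : Ω} (hu : τ u = u) : (σ * τ) u = σ u := by rw [mul_apply, hu]
  have hτ_apply {u : Ω} (hu : σ u = u) : (σ * τ) u = τ u := by rw [hcomm.eq, mul_apply, hu]
  have hmixed {u v : Ω} (hu : σ u ≠ u) (hv : τ v ≠ v) (h₀ : f u = f v) (h₁ : f (σ u) = f (τ v)) :
      f (σ u) = f u :=
    have hu_eq : f u = t := (hle u hu).antisymm (h₀ ▸ hge v hv)
    have hσu_eq : f (σ u) = t :=
      (hle _ (σ.injective.ne hu)).antisymm (h₁ ▸ hge _ (τ.injective.ne hv))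
    hσu_eq.trans hu_eq.symm
  intro x y hxy h
  have h₀ : f x = f y := h 0
  have h₁ : f ((σ * τ) x) = f ((σ * τ) y) := h 1
  by_cases hx : (σ * τ) x = x
  · rw [hx]
  by_cases hy : (σ * τ) y = y
  · rw [h₁, hy, h₀]
  obtain hx' | hx' := hστ x <;> obtain hy' | hy' := hστ y
  · rw [hτ_apply hx']
    refine hτ hxy fun n => ?_
    rw [← mul_pow_apply_of_apply_eq hcomm.symm hx', ← mul_pow_apply_of_apply_eq hcomm.symm hy',
      ← hcomm.eq, h n]
  · rw [hτ_apply hx'] at hx h₁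
    rw [hσ_apply hy'] at hy h₁
    rw [hτ_apply hx', h₁, h₀]
    exact hmixed hy hx h₀.symm h₁.symm
  · rw [hσ_apply hx'] at hx h₁ ⊢
    rw [hτ_apply hy'] at hy h₁
    exact hmixed hx hy h₀ h₁
  · rw [hσ_apply hx']
    refine hσ hxy fun n => ?_
    rw [← mul_pow_apply_of_apply_eq hcomm hx', ← mul_pow_apply_of_apply_eq hcomm hy', h n]

theorem apply_eq_apply_of_formPerm_apply_eq_head [DecidableEq Ω] [PartialOrder γ] {a : Ω}
    {l : List Ω} (hl : (a :: l).Nodup) (hmono : (a :: l).Pairwise (f · ≤ f ·)) {u v : Ω}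
    (hu : (a :: l).formPerm u = a) (hv : v ∈ a :: l) (huv : u ≠ v) (h₀ : f u = f v)
    (h₁ : f ((a :: l).formPerm u) = f ((a :: l).formPerm v)) {x : Ω} (hx : x ∈ a :: l) :
    f x = f a := by
  have hle {i j : ℕ} (hj : j < (a :: l).length) (hij : i ≤ j) :
      f (a :: l)[i] ≤ f (a :: l)[j] := by
    obtain rfl | hlt := hij.eq_or_lt
    · rfl
    · exact List.pairwise_iff_getElem.1 hmono i j _ hj hlt
  have hu_last : u = (a :: l)[l.length] :=
    (a :: l).formPerm.injective (hu.trans (List.formPerm_apply_getElem_length a l).symm)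
  obtain ⟨i, hi, rfl⟩ := List.mem_iff_getElem.1 hx
  obtain ⟨j, hj, rfl⟩ := List.mem_iff_getElem.1 hv
  have hj_lt : j < l.length := by
    refine (Nat.lt_succ_iff.1 hj).lt_of_ne ?_
    rintro rfl
    exact huv hu_last
  have hj_succ : j + 1 < (a :: l).length := Nat.succ_lt_succ hj_lt
  rw [hu, List.formPerm_apply_lt_getElem _ hl j hj_succ] at h₁
  refine le_antisymm ?_ (hle hi (Nat.zero_le i))
  calc f (a :: l)[i] ≤ f u := hu_last ▸ hle (Nat.lt_succ_self _) (Nat.lt_succ_iff.1 hi)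
    _ = f (a :: l)[j] := h₀
    _ ≤ f (a :: l)[j + 1] := hle hj_succ (Nat.le_succ j)
    _ = f a := h₁.symm

theorem isItineraryRigid_formPerm [DecidableEq Ω] [PartialOrder γ] {l : List Ω} (hl : l.Nodup)
    (hmono : l.Pairwise (f · ≤ f ·)) : IsItineraryRigid f l.formPerm := by
  obtain _ | ⟨a, l⟩ := l
  · exact isItineraryRigid_one
  set σ := (a :: l).formPerm
  intro x y hxy h
  by_cases hx : x ∈ a :: l
  swap
  · rw [List.formPerm_apply_of_notMem hx]
  by_cases hy : y ∈ a :: l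
  swap
  · have hconst (n : ℕ) : f ((σ ^ n) x) = f y := by
      rw [h n, pow_apply_eq_self_of_apply_eq_self (List.formPerm_apply_of_notMem hy)]
    exact (hconst 1).trans (hconst 0).symm
  have hσx : σ x ∈ a :: l := List.formPerm_apply_mem_of_mem hx
  obtain ⟨n, hn⟩ : ∃ n : ℕ, (σ ^ n) (σ x) = a :=
    hl.isCycleOn_formPerm.exists_pow_eq' (List.finite_toSet _) hσx List.mem_cons_self
  have hhead : σ ((σ ^ n) x) = a := by rw [← hn, ← mul_apply, ← mul_apply, pow_mul_comm']
  have hmem : (σ ^ n) y ∈ a :: l := List.form_perm_zpow_apply_mem_imp_mem _ y hy n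
  have h₁ : f (σ ((σ ^ n) x)) = f (σ ((σ ^ n) y)) := by
    simpa only [pow_succ', mul_apply] using h (n + 1)
  have hconst {w : Ω} (hw : w ∈ a :: l) : f w = f a :=
    apply_eq_apply_of_formPerm_apply_eq_head hl hmono hhead hmem ((σ ^ n).injective.ne hxy)
      (h n) h₁ hw
  rw [hconst hσx, hconst hx]

end Rigid

section LinkPerm

variable {Ω : Type*} {α : Perm Ω}

theorem getLast_cons_sublist_append {l F : List Ω} (hl : l ≠ []) :
    (l.getLast hl :: F).Sublist (l ++ F) := by
  conv_rhs => rw [← List.dropLast_append_getLast hl, List.append_assoc]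
  exact List.sublist_append_right _ _

variable {a : Ω} {C : List Ω} {Cs : List (List Ω)}

theorem nodup_apply_cons (hnodup : (a :: (C :: Cs).flatten).Nodup)
    (hα : ∀ b ∈ a :: (C :: Cs).flatten, α b ∉ a :: (C :: Cs).flatten) : (α a :: C).Nodup := by
  refine List.nodup_cons.2 ⟨fun h => hα a List.mem_cons_self ?_, ?_⟩
  · exact List.mem_cons_of_mem _ (List.mem_append_left _ h)
  · exact (List.nodup_cons.1 hnodup).2.of_append_left

variable [DecidableEq Ω]

/-- The permutation stringing the points of the chunks `C₀, C₁, …` together: its cycles are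
`(α a₀, C₀)`, `(α a₁, C₁)`, …, where `a₀ = a` and `aᵢ₊₁` is the last element of `(aᵢ, Cᵢ)`.
An empty chunk contributes a trivial cycle. When the `α`-cycles through `a` and the points of the
chunks cover `Ω`, the group it generates together with `α` is transitive. -/
def linkPerm (α : Perm Ω) : Ω → List (List Ω) → Perm Ω
  | _, [] => 1
  | a, C :: Cs =>
    (α a :: C).formPerm * linkPerm α ((a :: C).getLast (List.cons_ne_nil a C)) Cs

theorem mem_or_exists_of_linkPerm_apply_ne {x : Ω} (hx : linkPerm α a Cs x ≠ x) :
    x ∈ Cs.flatten ∨ ∃ b ∈ a :: Cs.flatten, α b = x := by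
  induction Cs generalizing a with
  | nil => exact (hx rfl).elim
  | cons C Cs ih =>
    have hsub := getLast_cons_sublist_append (F := Cs.flatten) (List.cons_ne_nil a C)
    rw [linkPerm, mul_apply] at hx
    by_cases htail : linkPerm α ((a :: C).getLast (List.cons_ne_nil a C)) Cs x = x
    · rw [htail] at hx
      obtain rfl | hmem := List.mem_cons.1 (List.mem_of_formPerm_apply_ne hx)
      · exact Or.inr ⟨a, List.mem_cons_self, rfl⟩
      · exact Or.inl (List.mem_append_left _ hmem)
    · exact (ih htail).imp (List.mem_append_right C) fun ⟨b, hb, hbx⟩ => ⟨b, hsub.subset hb, hbx⟩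

theorem disjoint_formPerm_linkPerm (hnodup : (a :: (C :: Cs).flatten).Nodup)
    (hα : ∀ b ∈ a :: (C :: Cs).flatten, α b ∉ a :: (C :: Cs).flatten) :
    Perm.Disjoint (α a :: C).formPerm
      (linkPerm α ((a :: C).getLast (List.cons_ne_nil a C)) Cs) := by
  obtain rfl | hC := eq_or_ne C []
  · exact List.formPerm_singleton (α a) ▸ disjoint_one_left _
  have hsub := getLast_cons_sublist_append (F := Cs.flatten) (List.cons_ne_nil a C)
  have hlast : (a :: C).getLast (List.cons_ne_nil a C) ∈ C :=
    List.getLast_cons hC ▸ List.getLast_mem hC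
  obtain ⟨ha, hnodup⟩ := List.nodup_cons.1 hnodup
  refine fun x => or_iff_not_imp_left.2 fun hx => by_contra fun hx' => ?_
  have hx := List.mem_of_formPerm_apply_ne hx
  obtain hxF | ⟨b, hb, rfl⟩ := mem_or_exists_of_linkPerm_apply_ne hx'
  · obtain rfl | hxC := List.mem_cons.1 hx
    · exact hα a List.mem_cons_self (List.mem_cons_of_mem _ (List.mem_append_right C hxF))
    · exact List.disjoint_of_nodup_append hnodup hxC hxF
  · obtain hba | hbC := List.mem_cons.1 hx
    · obtain rfl := α.injective hba
      obtain hb | hb := List.mem_cons.1 hb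
      · exact ha (List.mem_append_left _ (hb ▸ hlast))
      · exact ha (List.mem_append_right C hb)
    · exact hα b (hsub.subset hb) (List.mem_cons_of_mem _ (List.mem_append_left _ hbC))

theorem cycleType_formPerm_eq_filter [Fintype Ω] {l : List Ω} (hl : l.Nodup) :
    l.formPerm.cycleType = ({l.length} : Multiset ℕ).filter (2 ≤ ·) := by
  by_cases hlen : 2 ≤ l.length
  · have hne (x : Ω) : l ≠ [x] := by
      rintro rfl
      exact absurd hlen (by simp)
    rw [(List.isCycle_formPerm hl hlen).cycleType, List.support_formPerm_of_nodup l hl hne,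
      List.toFinset_card_of_nodup hl, Multiset.filter_singleton, if_pos hlen]
  · rw [(List.formPerm_eq_one_iff l hl).2 (by omega), cycleType_one, Multiset.filter_singleton,
      if_neg hlen]
    rfl

theorem cycleType_linkPerm [Fintype Ω] (hnodup : (a :: Cs.flatten).Nodup)
    (hα : ∀ b ∈ a :: Cs.flatten, α b ∉ a :: Cs.flatten) :
    (linkPerm α a Cs).cycleType =
      (Cs.map (·.length + 1) : Multiset ℕ).filter (2 ≤ ·) := by
  induction Cs generalizing a with
  | nil => exact cycleType_one
  | cons C Cs ih =>
    have hsub := getLast_cons_sublist_append (F := Cs.flatten) (List.cons_ne_nil a C)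
    rw [linkPerm, (disjoint_formPerm_linkPerm hnodup hα).cycleType_mul,
      cycleType_formPerm_eq_filter (nodup_apply_cons hnodup hα),
      ih (hnodup.sublist hsub) fun b hb h => hα b (hsub.subset hb) (hsub.subset h),
      ← Multiset.filter_add, List.map_cons, List.length_cons, ← Multiset.cons_coe,
      Multiset.singleton_add]

theorem apply_eq_apply_of_mem_flatten {Y : Type*} {F : Ω → Y}
    (hnodup : (a :: Cs.flatten).Nodup) (hα : ∀ b ∈ a :: Cs.flatten, α b ∉ a :: Cs.flatten)
    (hFα : ∀ x, F (α x) = F x) (hF : ∀ x, F (linkPerm α a Cs x) = F x) {b : Ω}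
    (hb : b ∈ Cs.flatten) : F b = F a := by
  induction Cs generalizing a with
  | nil => exact (List.not_mem_nil hb).elim
  | cons C Cs ih =>
    have hsub := getLast_cons_sublist_append (F := Cs.flatten) (List.cons_ne_nil a C)
    have hdisj := disjoint_formPerm_linkPerm hnodup hα
    have hC {c : Ω} (hc : c ∈ a :: C) : F c = F a := by
      obtain rfl | hc := List.mem_cons.1 hc
      · rfl
      rw [← hFα a]
      exact apply_eq_apply_of_mem_of_formPerm (nodup_apply_cons hnodup hα)
        (apply_eq_apply_of_disjoint_mul hdisj hF) (List.mem_cons_of_mem _ hc) List.mem_cons_self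
    obtain hb | hb := List.mem_append.1 hb
    · exact hC (List.mem_cons_of_mem _ hb)
    · refine (ih (hnodup.sublist hsub) (fun b hb h => hα b (hsub.subset hb) (hsub.subset h))
        (apply_eq_apply_of_disjoint_mul hdisj.symm ?_) hb).trans (hC (List.getLast_mem _))
      rwa [← hdisj.commute.eq]

theorem isItineraryRigid_linkPerm {γ : Type*} [PartialOrder γ] {f : Ω → γ}
    (hnodup : (a :: Cs.flatten).Nodup) (hα : ∀ b ∈ a :: Cs.flatten, α b ∉ a :: Cs.flatten)
    (hmono : (a :: Cs.flatten).Pairwise (f · ≤ f ·)) (hfα : ∀ x, f (α x) = f x) :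
    IsItineraryRigid f (linkPerm α a Cs) := by
  induction Cs generalizing a with
  | nil => exact isItineraryRigid_one
  | cons C Cs ih =>
    have hsub := getLast_cons_sublist_append (F := Cs.flatten) (List.cons_ne_nil a C)
    have hmonoC : (a :: C).Pairwise (f · ≤ f ·) :=
      hmono.sublist (List.sublist_append_left (a :: C) Cs.flatten)
    have hmonoF := hmono.sublist hsub
    have hmonoC' : (α a :: C).Pairwise (f · ≤ f ·) := by
      simpa only [List.pairwise_cons, hfα] using hmonoC
    refine (isItineraryRigid_formPerm (nodup_apply_cons hnodup hα) hmonoC').mul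
      (ih (hnodup.sublist hsub) (fun b hb h => hα b (hsub.subset hb) (hsub.subset h)) hmonoF)
      (disjoint_formPerm_linkPerm hnodup hα)
      (t := f ((a :: C).getLast (List.cons_ne_nil a C))) (fun x hx => ?_) fun x hx => ?_
    · have hle {c : Ω} (hc : c ∈ a :: C) : f c ≤ f ((a :: C).getLast (List.cons_ne_nil a C)) :=
        have : Std.Refl (fun u v => f u ≤ f v) := ⟨fun u => le_rfl⟩
        hmonoC.rel_getLast hc
      obtain rfl | hxC := List.mem_cons.1 (List.mem_of_formPerm_apply_ne hx)
      · exact (hfα a).trans_le (hle List.mem_cons_self)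
      · exact hle (List.mem_cons_of_mem a hxC)
    · have hge {c : Ω} (hc : c ∈ Cs.flatten) := (List.pairwise_cons.1 hmonoF).1 c hc
      obtain hxF | ⟨b, hb, rfl⟩ := mem_or_exists_of_linkPerm_apply_ne hx
      · exact hge hxF
      · rw [hfα]
        obtain rfl | hb := List.mem_cons.1 hb
        exacts [le_rfl, hge hb]

end LinkPerm

section CycleType

variable {Ω : Type*} [Fintype Ω] [DecidableEq Ω] {α β : Perm Ω}

theorem minimalPeriod_eq_card_support_cycleOf {x : Ω} (hx : α x ≠ x) :
    minimalPeriod α x = (α.cycleOf x).support.card := by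
  have hmem : x ∈ (α.cycleOf x).support :=
    mem_support_cycleOf_iff.2 ⟨SameCycle.refl α x, mem_support.2 hx⟩
  refine Nat.dvd_right_iff_eq.1 fun n => ?_
  rw [← isPeriodicPt_iff_minimalPeriod_dvd, ← (isCycleOn_support_cycleOf α x).pow_apply_eq hmem,
    IsPeriodicPt, IsFixedPt, iterate_eq_pow]

theorem mem_cycleType_iff_exists_minimalPeriod {n : ℕ} :
    n ∈ α.cycleType ↔ ∃ x, α x ≠ x ∧ minimalPeriod α x = n := by
  rw [cycleType_def, Multiset.mem_map]
  constructor
  · rintro ⟨c, hc, rfl⟩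
    obtain ⟨x, hx⟩ := (mem_cycleFactorsFinset_iff.1 hc).1.nonempty_support
    have hαx : α x ≠ x := mem_support.1 (mem_cycleFactorsFinset_support_le hc hx)
    refine ⟨x, hαx, ?_⟩
    rw [minimalPeriod_eq_card_support_cycleOf hαx, ← cycle_is_cycleOf hx hc, comp_apply]
  · rintro ⟨x, hx, rfl⟩
    exact ⟨α.cycleOf x, cycleOf_mem_cycleFactorsFinset_iff.2 (mem_support.2 hx),
      (minimalPeriod_eq_card_support_cycleOf hx).symm⟩

theorem mem_fullCycleType_iff {n : ℕ} : n ∈ fullCycleType α ↔ ∃ x, minimalPeriod α x = n := by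
  have hfix : Fintype.card Ω - α.support.card ≠ 0 ↔ ∃ x, α x = x := by
    rw [Nat.sub_ne_zero_iff_lt, Finset.card_lt_iff_ne_univ, Ne, Finset.eq_univ_iff_forall]
    simp only [Perm.mem_support, not_forall, not_not]
  rw [fullCycleType, Multiset.mem_add, mem_cycleType_iff_exists_minimalPeriod,
    Multiset.mem_replicate, hfix]
  constructor
  · rintro (⟨x, -, hx⟩ | ⟨⟨x, hx⟩, rfl⟩)
    exacts [⟨x, hx⟩, ⟨x, minimalPeriod_eq_one_iff_isFixedPt.2 hx⟩]
  · rintro ⟨x, rfl⟩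
    by_cases hx : α x = x
    exacts [Or.inr ⟨⟨x, hx⟩, minimalPeriod_eq_one_iff_isFixedPt.2 hx⟩, Or.inl ⟨x, hx, rfl⟩]

theorem gcd_minimalPeriod_eq_gcd_fullCycleType :
    Finset.univ.gcd (minimalPeriod α) = (fullCycleType α).gcd := by
  refine Nat.dvd_antisymm (Multiset.dvd_gcd.2 fun n hn => ?_) (Finset.dvd_gcd fun x _ => ?_)
  · obtain ⟨x, rfl⟩ := mem_fullCycleType_iff.1 hn
    exact Finset.gcd_dvd (Finset.mem_univ x)
  · exact Multiset.gcd_dvd (mem_fullCycleType_iff.2 ⟨x, rfl⟩)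

theorem isPartitionOf_fullCycleType (α : Perm Ω) :
    IsPartitionOf (Fintype.card Ω) (fullCycleType α) :=
  ⟨fun _ => α.partition.parts_pos, α.partition.parts_sum⟩

theorem fullCycleType_eq_cycleType (hα : ∀ x, α x ≠ x) : fullCycleType α = α.cycleType := by
  have hsupp : α.support = Finset.univ :=
    Finset.eq_univ_of_forall fun x => mem_support.2 (hα x)
  rw [fullCycleType, hsupp, Finset.card_univ, Nat.sub_self, Multiset.replicate_zero, add_zero]

theorem fullCycleType_eq_of_cycleType_eq_filter {D : Multiset ℕ}
    (hD : IsPartitionOf (Fintype.card Ω) D) (hβ : β.cycleType = D.filter (2 ≤ ·)) :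
    fullCycleType β = D := by
  have hones : D.filter (fun k => ¬ 2 ≤ k) =
      Multiset.replicate (D.filter (fun k => ¬ 2 ≤ k)).card 1 := by
    refine Multiset.eq_replicate_card.2 fun k hk => ?_
    have := hD.1 k (Multiset.mem_of_mem_filter hk)
    have := Multiset.of_mem_filter hk
    omega
  have hsplit := Multiset.filter_add_not (2 ≤ ·) D
  rw [← hβ, hones] at hsplit
  have hsum := congrArg Multiset.sum hsplit
  rw [Multiset.sum_add, sum_cycleType, Multiset.sum_replicate, smul_eq_mul, mul_one, hD.2] at hsum
  rw [fullCycleType, ← hsum, Nat.add_sub_cancel_left, hsplit]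

theorem nu_add_card {D : Multiset ℕ} (hD : ∀ k ∈ D, 0 < k) : nu D + D.card = D.sum := by
  calc nu D + D.card = (D.map fun k => k - 1 + 1).sum := by
        rw [nu, Multiset.sum_map_add, Multiset.map_const', Multiset.sum_replicate, smul_eq_mul,
          mul_one]
    _ = D.sum := by
        rw [Multiset.map_congr rfl fun k hk => Nat.sub_add_cancel (hD k hk), Multiset.map_id']

theorem exists_finset_cycle_representatives (α : Perm Ω) :
    ∃ s : Finset Ω, s.card = α.cycleType.card ∧
      (s : Set Ω).Pairwise (fun u v => ¬ α.SameCycle u v) ∧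
      ∀ x, α x ≠ x → ∃ b ∈ s, α.SameCycle b x := by
  choose rep hrep using fun c : α.cycleFactorsFinset =>
    (mem_cycleFactorsFinset_iff.1 c.2).1.nonempty_support
  have hcycleOf (c : α.cycleFactorsFinset) : (c : Perm Ω) = α.cycleOf (rep c) :=
    cycle_is_cycleOf (hrep c) c.2
  have hinj : Injective rep := fun c c' h =>
    Subtype.ext (by rw [hcycleOf c, h, ← hcycleOf c'])
  refine ⟨Finset.univ.image rep, ?_, ?_, fun x hx => ?_⟩
  · rw [Finset.card_image_of_injective _ hinj, Finset.card_univ, Fintype.card_coe, cycleType_def,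
      Multiset.card_map, Finset.card_def]
  · rw [Finset.coe_image]
    rintro _ ⟨c, -, rfl⟩ _ ⟨c', -, rfl⟩ hcc' h
    refine hcc' (congrArg rep (Subtype.ext ?_))
    rw [hcycleOf c, h.cycleOf_eq, ← hcycleOf c']
  · have hc := cycleOf_mem_cycleFactorsFinset_iff.2 (mem_support.2 hx)
    exact ⟨_, Finset.mem_image_of_mem rep (Finset.mem_univ ⟨_, hc⟩),
      (mem_support_cycleOf_iff.1 (hrep ⟨_, hc⟩)).1.symm⟩

end CycleType

theorem exists_nodup_list_pairwise_le {Ω γ : Type*} [LinearOrder γ] (f : Ω → γ) (s : Finset Ω) :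
    ∃ l : List Ω, l.Nodup ∧ l.length = s.card ∧ (∀ x, x ∈ l ↔ x ∈ s) ∧
      l.Pairwise (f · ≤ f ·) := by
  have : Std.Total (fun x y => f x ≤ f y) := ⟨fun x y => le_total (f x) (f y)⟩
  have : IsTrans Ω (fun x y => f x ≤ f y) := ⟨fun x y z => le_trans⟩
  have hperm := List.perm_insertionSort (f · ≤ f ·) s.toList
  refine ⟨_, hperm.nodup_iff.2 s.nodup_toList, hperm.length_eq.trans s.length_toList,
    fun x => hperm.mem_iff.trans Finset.mem_toList, List.pairwise_insertionSort _ _⟩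

theorem exists_flatten_eq {Ω : Type*} {D : Multiset ℕ} (hD : ∀ k ∈ D, 0 < k) {l : List Ω}
    (hl : l.length = nu D) :
    ∃ Cs : List (List Ω), Cs.flatten = l ∧ (Cs.map (·.length + 1) : Multiset ℕ) = D := by
  have hsum : (D.toList.map (· - 1)).sum = l.length := by
    rw [hl, nu, ← Multiset.sum_coe, ← Multiset.map_coe, Multiset.coe_toList]
  refine ⟨(D.toList.map (· - 1)).splitLengths l, List.flatten_splitLengths _ _ hsum.ge, ?_⟩
  have hlen := List.map_splitLengths_length l _ hsum.le
  calc (((D.toList.map (· - 1)).splitLengths l).map (·.length + 1) : Multiset ℕ)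
      = (D.toList.map fun k => k - 1 + 1 : List ℕ) := by
        have h := congrArg (List.map (· + 1)) hlen
        rw [List.map_map, List.map_map] at h
        exact congrArg _ h
    _ = (D.map fun k => k - 1 + 1) := by rw [← Multiset.map_coe, Multiset.coe_toList]
    _ = D := by
        rw [Multiset.map_congr rfl fun k hk => Nat.sub_add_cancel (hD k hk), Multiset.map_id']

theorem exists_sorted_cycle_representatives {Ω : Type*} [Fintype Ω] [DecidableEq Ω] {α : Perm Ω}
    (hα : ∀ x, α x ≠ x) {D : Multiset ℕ} (hD : ∀ k ∈ D, 0 < k)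
    (hsum : nu (fullCycleType α) + nu D + 1 = Fintype.card Ω) :
    ∃ (a : Ω) (Cs : List (List Ω)), (a :: Cs.flatten).Nodup ∧
      (a :: Cs.flatten).Pairwise (minimalPeriod α · ≤ minimalPeriod α ·) ∧
      {b | b ∈ a :: Cs.flatten}.Pairwise (fun u v => ¬ α.SameCycle u v) ∧
      (∀ x, ∃ b ∈ a :: Cs.flatten, α.SameCycle b x) ∧
      (Cs.map (·.length + 1) : Multiset ℕ) = D := by
  obtain ⟨s, hcard, hs, hrep⟩ := exists_finset_cycle_representatives α
  obtain ⟨L, hnodup, hL, hmem, hmono⟩ := exists_nodup_list_pairwise_le (minimalPeriod α) s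
  have hcount : nu (fullCycleType α) + L.length = Fintype.card Ω := by
    rw [hL, hcard, ← fullCycleType_eq_cycleType hα,
      nu_add_card (isPartitionOf_fullCycleType α).1, (isPartitionOf_fullCycleType α).2]
  obtain _ | ⟨a, L⟩ := L
  · rw [List.length_nil] at hcount
    omega
  have hLD : L.length = nu D := by
    rw [List.length_cons] at hcount
    omega
  obtain ⟨Cs, rfl, hCs⟩ := exists_flatten_eq hD hLD
  refine ⟨a, Cs, hnodup, hmono, hs.mono fun b => (hmem b).1, fun x => ?_, hCs⟩
  simpa only [hmem] using hrep x (hα x)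

theorem isPretransitive_closure_linkPerm {Ω : Type*} [DecidableEq Ω] {α : Perm Ω} {a : Ω}
    {Cs : List (List Ω)} (hnodup : (a :: Cs.flatten).Nodup)
    (hα : ∀ b ∈ a :: Cs.flatten, α b ∉ a :: Cs.flatten)
    (hrep : ∀ x, ∃ b ∈ a :: Cs.flatten, α.SameCycle b x) :
    MulAction.IsPretransitive (Subgroup.closure {α, linkPerm α a Cs}) Ω := by
  set H := Subgroup.closure {α, linkPerm α a Cs}
  have horbit {g : Perm Ω} (hg : g ∈ ({α, linkPerm α a Cs} : Set (Perm Ω))) (x : Ω) :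
      MulAction.orbit H (g x) = MulAction.orbit H x :=
    MulAction.orbit_smul (⟨g, Subgroup.subset_closure hg⟩ : H) x
  have ha (x : Ω) : MulAction.orbit H x = MulAction.orbit H a := by
    obtain ⟨b, hb, hbx⟩ := hrep x
    rw [← apply_eq_apply_of_sameCycle (horbit (Set.mem_insert _ _)) hbx]
    obtain rfl | hb := List.mem_cons.1 hb
    · rfl
    · exact apply_eq_apply_of_mem_flatten hnodup hα (horbit (Set.mem_insert _ _))
        (horbit (Set.mem_insert_of_mem _ rfl)) hb
  exact ⟨fun x y => MulAction.orbit_eq_iff.1 ((ha y).trans (ha x).symm)⟩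

theorem statement_7_general {Ω : Type*} [Fintype Ω] [DecidableEq Ω] (α : Perm Ω) (D : Multiset ℕ)
    (hD : IsPartitionOf (Fintype.card Ω) D)
    (hsum : nu (fullCycleType α) + nu D + 1 = Fintype.card Ω)
    (hgcd : (fullCycleType α).gcd = 1) (h3 : ∀ c ∈ fullCycleType α, 3 ≤ c) :
    ∃ β : Perm Ω, fullCycleType β = D ∧ SubgroupPrimitive (Subgroup.closure {α, β}) := by
  have hlen (x : Ω) : 3 ≤ minimalPeriod α x := h3 _ (mem_fullCycleType_iff.2 ⟨x, rfl⟩)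
  have hfix (x : Ω) : α x ≠ x := fun h => by
    have := hlen x
    rw [minimalPeriod_eq_one_iff_isFixedPt.2 h] at this
    omega
  obtain ⟨a, Cs, hnodup, hmono, hA, hrep, rfl⟩ :=
    exists_sorted_cycle_representatives hfix hD.1 hsum
  have hα (b : Ω) (hb : b ∈ a :: Cs.flatten) : α b ∉ a :: Cs.flatten := fun hαb =>
    hA hb hαb (hfix b).symm (sameCycle_apply_right.2 (SameCycle.refl α b))
  refine ⟨linkPerm α a Cs, fullCycleType_eq_of_cycleType_eq_filter hD ?_, ?_⟩
  · exact cycleType_linkPerm hnodup hα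
  have := isPretransitive_closure_linkPerm hnodup hα hrep
  have := isPreprimitive_closure_pair hA (fun x hx => ?_) hlen
    (gcd_minimalPeriod_eq_gcd_fullCycleType.trans hgcd)
    (isItineraryRigid_linkPerm hnodup hα hmono (minimalPeriod_apply_eq α))
  · exact subgroupPrimitive_of_isPreprimitive _
  · exact (mem_or_exists_of_linkPerm_apply_ne hx).imp_left (List.mem_cons_of_mem a)

/-- If `𝒟 ≠ {[2,…,2,1],[2,…,2,1]}`, `gcd(D₁) = 1` and every part of `D₁` is at
least 3, then for every `α ∈ D₁` there is `β ∈ D₂` such that `⟨α, β⟩` is primitive. -/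
theorem statement_7 {Ω : Type*} [Fintype Ω] [DecidableEq Ω] (d : ℕ)
    (hcard : Fintype.card Ω = d) (hd : Odd d) (hdpos : 0 < d)
    (D₁ D₂ : Multiset ℕ) (hP1 : IsPartitionOf d D₁) (hP2 : IsPartitionOf d D₂)
    (hnt1 : D₁ ≠ {d} ∧ D₁ ≠ Multiset.replicate d 1)
    (hnt2 : D₂ ≠ {d} ∧ D₂ ≠ Multiset.replicate d 1)
    (hsum : nu D₁ + nu D₂ = d - 1) (hord : nu D₂ ≤ nu D₁)
    (hne : ¬ (D₁ = twosAndOne d ∧ D₂ = twosAndOne d))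
    (hgcd : D₁.gcd = 1)
    (h3 : ∀ c ∈ D₁, 3 ≤ c) :
    ∀ α : Equiv.Perm Ω, fullCycleType α = D₁ →
      ∃ β : Equiv.Perm Ω, fullCycleType β = D₂ ∧
        SubgroupPrimitive (Subgroup.closure {α, β}) := by
  rintro α rfl
  exact statement_7_general α D₂ (hcard ▸ hP2) (by omega) hgcd h3
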